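/- The inf-convolution-type transform preserves feasibility: Let X = ∏_{i=1}^n [aᵢ, bᵢ] ⊂ ℝⁿ be a compact box with 0 ≤ aᵢ < bᵢ for each i, let φ ∈ 𝒰(X), and define ψ̄ : X → ℝ by ψ̄(y) = sup_{x ∈ X} (φ(x) − ‖x − y‖₁). Then ψ̄ is continuous, coordinatewise nondecreasing, convex, and 1-Lipschitz with respect to the ℓ¹ norm; that is, ψ̄ ∈ 𝒰(X) ∩ ℒ₁(X). -/

import Mathlib

open MeasureTheory Set

/-- ℓ¹ distance on `Fin n → ℝ`. -/
noncomputable def l1dist {n : ℕ} (x y : Fin n → ℝ) : ℝ := ∑ i, |x i - y i|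

/-- The box `∏ i, [a i, b i]` in `ℝⁿ`. -/
def box {n : ℕ} (a b : Fin n → ℝ) : Set (Fin n → ℝ) := {x | ∀ i, x i ∈ Set.Icc (a i) (b i)}

/-- `u ∈ 𝒰(X)`: continuous, coordinatewise nondecreasing and convex on `X`. -/
def memU {n : ℕ} (X : Set (Fin n → ℝ)) (u : (Fin n → ℝ) → ℝ) : Prop :=
  ContinuousOn u X ∧ (∀ x ∈ X, ∀ y ∈ X, (∀ i, x i ≤ y i) → u x ≤ u y) ∧ ConvexOn ℝ X u

/-- `u ∈ ℒ₁(X)`: 1-Lipschitz with respect to the ℓ¹ norm on `X`. -/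
def memL1 {n : ℕ} (X : Set (Fin n → ℝ)) (u : (Fin n → ℝ) → ℝ) : Prop :=
  ∀ x ∈ X, ∀ y ∈ X, u x - u y ≤ l1dist x y

/-! A point `x` competing for the supremum at `y` may be replaced by `x ⊔ z` for any `z ≥ y` in `X`:
this raises `φ`, and `x ⊔ z` is at least as close to `z` as `x` is to `y`. Hence the transform is
monotone and, taking `z = y`, only points above `y` matter. For convexity, above `y` the ℓ¹ distance
is the affine function `∑ i, (x i - y i)`, and every point of `X` above `s • y + t • z` splits as
`s • p + t • q` with `y ≤ p` and `z ≤ q`, so the convexity of `φ` passes to the supremum. -/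

section OrderedField

variable {𝕜 : Type*} [Field 𝕜] [LinearOrder 𝕜] [IsStrictOrderedRing 𝕜]

theorem exists_mem_Icc_convexCombo_eq {s t x y z b : 𝕜} (hst : s + t = 1) (hy : y ≤ b)
    (hz : z ≤ b) (hx : x ∈ Icc (s * y + t * z) b) :
    ∃ p ∈ Icc y b, ∃ q ∈ Icc z b, s * p + t * q = x := by
  rw [← segment_eq_Icc (hx.1.trans hx.2)] at hx
  obtain ⟨c, d, hc, hd, hcd, rfl⟩ := hx
  rw [← segment_eq_Icc hy, ← segment_eq_Icc hz]
  refine ⟨c * y + d * b, ⟨c, d, hc, hd, hcd, rfl⟩, c * z + d * b, ⟨c, d, hc, hd, hcd, rfl⟩, ?_⟩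
  simp only [smul_eq_mul]
  linear_combination d * b * hst

theorem exists_mem_Icc_pi_convexCombo_eq {ι : Type*} {s t : 𝕜} {x y z b : ι → 𝕜}
    (hst : s + t = 1) (hy : y ≤ b) (hz : z ≤ b) (hx : x ∈ Icc (s • y + t • z) b) :
    ∃ p ∈ Icc y b, ∃ q ∈ Icc z b, s • p + t • q = x := by
  choose p hp q hq hpq using fun i =>
    exists_mem_Icc_convexCombo_eq hst (hy i) (hz i) ⟨hx.1 i, hx.2 i⟩
  exact ⟨p, ⟨fun i => (hp i).1, fun i => (hp i).2⟩, q, ⟨fun i => (hq i).1, fun i => (hq i).2⟩,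
    funext hpq⟩

end OrderedField

theorem supClosed_of_ordConnected_of_isGreatest {α : Type*} [SemilatticeSup α] {X : Set α} {b : α}
    (hX : X.OrdConnected) (hb : IsGreatest X b) : SupClosed X := fun _ hx _ hy =>
  hX.out hx hb.1 ⟨le_sup_left, sup_le (hb.2 hx) (hb.2 hy)⟩

section L1Dist

variable {n : ℕ}

theorem box_eq_Icc (a b : Fin n → ℝ) : box a b = Icc a b := by
  ext x
  simp [box, Pi.le_def, forall_and]

theorem l1dist_nonneg (x y : Fin n → ℝ) : 0 ≤ l1dist x y :=
  Finset.sum_nonneg fun _ _ => abs_nonneg _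

theorem l1dist_triangle (x y z : Fin n → ℝ) : l1dist x z ≤ l1dist x y + l1dist y z := by
  simp only [l1dist, ← Finset.sum_add_distrib]
  exact Finset.sum_le_sum fun _ _ => abs_sub_le _ _ _

theorem l1dist_le_mul_dist (x y : Fin n → ℝ) : l1dist x y ≤ n * dist x y := by
  simpa [l1dist, Real.dist_eq] using
    Finset.sum_le_card_nsmul Finset.univ _ _ fun i _ => dist_le_pi_dist x y i

theorem l1dist_eq_sum_sub {x y : Fin n → ℝ} (hyx : y ≤ x) : l1dist x y = ∑ i, (x i - y i) :=
  Finset.sum_congr rfl fun i _ => abs_of_nonneg (sub_nonneg.2 (hyx i))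

theorem l1dist_sup_le {y z : Fin n → ℝ} (x : Fin n → ℝ) (hyz : y ≤ z) :
    l1dist (x ⊔ z) z ≤ l1dist x y := by
  rw [l1dist_eq_sum_sub le_sup_right]
  refine Finset.sum_le_sum fun i _ => ?_
  calc (x ⊔ z) i - z i = max (x i - z i) 0 := by simp [← max_sub_sub_right]
    _ ≤ |x i - y i| :=
      max_le ((sub_le_sub_left (hyz i) _).trans (le_abs_self _)) (abs_nonneg _)

theorem l1dist_convexCombo_of_le {s t : ℝ} {p q y z : Fin n → ℝ} (hs : 0 ≤ s) (ht : 0 ≤ t)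
    (hp : y ≤ p) (hq : z ≤ q) :
    l1dist (s • p + t • q) (s • y + t • z) = s * l1dist p y + t * l1dist q z := by
  have hle : s • y + t • z ≤ s • p + t • q := by gcongr
  rw [l1dist_eq_sum_sub hle, l1dist_eq_sum_sub hp, l1dist_eq_sum_sub hq, Finset.mul_sum,
    Finset.mul_sum, ← Finset.sum_add_distrib]
  refine Finset.sum_congr rfl fun i _ => ?_
  simp only [Pi.add_apply, Pi.smul_apply, smul_eq_mul]
  ring

theorem memL1.lipschitzOnWith {X : Set (Fin n → ℝ)} {u : (Fin n → ℝ) → ℝ} (hu : memL1 X u) :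
    LipschitzOnWith n u X :=
  LipschitzOnWith.of_le_add_mul _ fun x hx y hy =>
    sub_le_iff_le_add'.1 ((hu x hx y hy).trans (l1dist_le_mul_dist x y))

end L1Dist

/-- The transform `ψ̄(y) = sup_{x ∈ X} (φ(x) − ‖x − y‖₁)` of `φ` over `X`. As `sSup` in `ℝ` is `0`
on sets that are empty or unbounded above, it has this meaning only for nonempty `X` and `φ` such
that `x ↦ φ(x) − ‖x − y‖₁` is bounded above on `X`. -/
noncomputable def l1Transform {n : ℕ} (X : Set (Fin n → ℝ)) (φ : (Fin n → ℝ) → ℝ)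
    (y : Fin n → ℝ) : ℝ :=
  sSup ((fun x => φ x - l1dist x y) '' X)

section L1Transform

variable {n : ℕ} {X : Set (Fin n → ℝ)} {φ : (Fin n → ℝ) → ℝ} {b x y z : Fin n → ℝ} {c : ℝ}

theorem le_l1Transform (hφ : BddAbove (φ '' X)) (hx : x ∈ X) (y : Fin n → ℝ) :
    φ x - l1dist x y ≤ l1Transform X φ y := by
  obtain ⟨M, hM⟩ := hφ
  refine le_csSup ⟨M, forall_mem_image.2 fun w hw => ?_⟩ (mem_image_of_mem _ hx)
  exact (sub_le_self _ (l1dist_nonneg w y)).trans (hM (mem_image_of_mem φ hw))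

theorem l1Transform_le (hX : X.Nonempty) (h : ∀ x ∈ X, φ x - l1dist x y ≤ c) :
    l1Transform X φ y ≤ c :=
  csSup_le (hX.image _) (forall_mem_image.2 h)

theorem l1Transform_sub_le_l1dist (hX : X.Nonempty) (hφ : BddAbove (φ '' X)) (y z : Fin n → ℝ) :
    l1Transform X φ y - l1Transform X φ z ≤ l1dist y z := by
  rw [sub_le_iff_le_add]
  refine l1Transform_le hX fun x hx => ?_
  linarith [le_l1Transform hφ hx z, l1dist_triangle x y z]

theorem sub_l1dist_le_sup_sub_l1dist (hX : SupClosed X) (hφ : MonotoneOn φ X) (hx : x ∈ X)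
    (hz : z ∈ X) (hyz : y ≤ z) :
    φ x - l1dist x y ≤ φ (x ⊔ z) - l1dist (x ⊔ z) z :=
  sub_le_sub (hφ hx (hX hx hz) le_sup_left) (l1dist_sup_le x hyz)

theorem l1Transform_le_of_forall_ge (hX : SupClosed X) (hφ : MonotoneOn φ X) (hy : y ∈ X)
    (h : ∀ x ∈ X, y ≤ x → φ x - l1dist x y ≤ c) : l1Transform X φ y ≤ c :=
  l1Transform_le ⟨y, hy⟩ fun _ hx =>
    (sub_l1dist_le_sup_sub_l1dist hX hφ hx hy le_rfl).trans (h _ (hX hx hy) le_sup_right)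

theorem monotoneOn_l1Transform (hX : SupClosed X) (hφ : MonotoneOn φ X)
    (hbdd : BddAbove (φ '' X)) : MonotoneOn (l1Transform X φ) X := fun _ _ z hz hyz =>
  l1Transform_le ⟨z, hz⟩ fun _ hx =>
    (sub_l1dist_le_sup_sub_l1dist hX hφ hx hz hyz).trans (le_l1Transform hbdd (hX hx hz) z)

theorem convexOn_l1Transform (hX : X.OrdConnected) (hb : IsGreatest X b) (hmono : MonotoneOn φ X)
    (hconv : ConvexOn ℝ X φ) : ConvexOn ℝ X (l1Transform X φ) := by
  have hbdd : BddAbove (φ '' X) := (hmono.map_isGreatest hb).bddAbove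
  have hsup : SupClosed X := supClosed_of_ordConnected_of_isGreatest hX hb
  refine ⟨hconv.1, fun y hy z hz s t hs ht hst => ?_⟩
  refine l1Transform_le_of_forall_ge hsup hmono (hconv.1 hy hz hs ht hst) fun x hx hle => ?_
  obtain ⟨p, hp, q, hq, rfl⟩ :=
    exists_mem_Icc_pi_convexCombo_eq hst (hb.2 hy) (hb.2 hz) ⟨hle, hb.2 hx⟩
  have hpX : p ∈ X := hX.out hy hb.1 hp
  have hqX : q ∈ X := hX.out hz hb.1 hq
  calc φ (s • p + t • q) - l1dist (s • p + t • q) (s • y + t • z)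
      ≤ (s * φ p + t * φ q) - (s * l1dist p y + t * l1dist q z) :=
        sub_le_sub (hconv.2 hpX hqX hs ht hst) (l1dist_convexCombo_of_le hs ht hp.1 hq.1).ge
    _ = s * (φ p - l1dist p y) + t * (φ q - l1dist q z) := by ring
    _ ≤ s * l1Transform X φ y + t * l1Transform X φ z := by
        gcongr
        exacts [le_l1Transform hbdd hpX y, le_l1Transform hbdd hqX z]

theorem transform_preserves_feasibility_general (hX : X.OrdConnected) (hb : IsGreatest X b)
    (hmono : MonotoneOn φ X) (hconv : ConvexOn ℝ X φ) :
    memU X (l1Transform X φ) ∧ memL1 X (l1Transform X φ) := by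
  have hbdd : BddAbove (φ '' X) := (hmono.map_isGreatest hb).bddAbove
  have hlip : memL1 X (l1Transform X φ) := fun y _ z _ =>
    l1Transform_sub_le_l1dist hb.nonempty hbdd y z
  have hTmono : MonotoneOn (l1Transform X φ) X :=
    monotoneOn_l1Transform (supClosed_of_ordConnected_of_isGreatest hX hb) hmono hbdd
  exact ⟨⟨hlip.lipschitzOnWith.continuousOn, fun y hy z hz hyz => hTmono hy hz hyz,
    convexOn_l1Transform hX hb hmono hconv⟩, hlip⟩

end L1Transform

/-- **The inf-convolution-type transform preserves feasibility.** For `φ ∈ 𝒰(X)` on the box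
`X`, the function `ψ̄(y) = sup_{x ∈ X} (φ(x) − ‖x − y‖₁)` is continuous, coordinatewise
nondecreasing, convex, and 1-Lipschitz w.r.t. the ℓ¹ norm; that is, `ψ̄ ∈ 𝒰(X) ∩ ℒ₁(X)`. -/
theorem transform_preserves_feasibility {n : ℕ} (a b : Fin n → ℝ)
    (hab : ∀ i, 0 ≤ a i ∧ a i < b i)
    (φ : (Fin n → ℝ) → ℝ) (hφ : memU (box a b) φ) :
    memU (box a b) (fun y => sSup ((fun x => φ x - l1dist x y) '' box a b)) ∧
    memL1 (box a b) (fun y => sSup ((fun x => φ x - l1dist x y) '' box a b)) := by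
  rw [box_eq_Icc] at hφ ⊢
  exact transform_preserves_feasibility_general ordConnected_Icc
    (isGreatest_Icc fun i => (hab i).2.le) (fun x hx y hy => hφ.2.1 x hx y hy) hφ.2.2
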